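/- For Ψ ∈ Λ^k(U,𝔥) and Φ ∈ Λ¹(U,𝔥), one has Ψ ∧^{,} (Φ∧Φ) = (Ψ ∧^⟨,⟩ Φ) ∧^{,} Φ. -/

import Mathlib

open scoped TensorProduct

noncomputable section

/-- `V`-valued `k`-forms on `ℝⁿ` (to be considered on an open set `U ⊆ ℝⁿ`):
fields of alternating `k`-multilinear maps, i.e. `Λᵏ(U, V)`. -/
abbrev Form (n k : ℕ) (V : Type*) [AddCommGroup V] [Module ℝ V] :=
  (Fin n → ℝ) → ((Fin n → ℝ) [⋀^Fin k]→ₗ[ℝ] V)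

/-- A form is smooth on `U` if all of its scalar components are `C^∞` on `U`. -/
def SmoothFormOn {n k : ℕ} {V : Type*} [NormedAddCommGroup V] [NormedSpace ℝ V]
    (U : Set (Fin n → ℝ)) (ω : Form n k V) : Prop :=
  ∀ v : Fin k → (Fin n → ℝ), ContDiffOn ℝ (⊤ : ℕ∞) (fun x => ω x v) U

/-- Wedge product of vector valued forms along a bilinear pairing `β`:
writing `ω = Σ ωᵃ Xₐ` and `η = Σ ηᵇ Y_b`, `ω ∧^β η = Σ ωᵃ ∧ ηᵇ β Xₐ Y_b`. -/
def wedgeB {n k l : ℕ} {V W X : Type*} [AddCommGroup V] [Module ℝ V]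
    [AddCommGroup W] [Module ℝ W] [AddCommGroup X] [Module ℝ X]
    (β : V →ₗ[ℝ] W →ₗ[ℝ] X) (ω : Form n k V) (η : Form n l W) : Form n (k + l) X :=
  fun x => (TensorProduct.lift β).compAlternatingMap
    (((ω x).domCoprod (η x)).domDomCongr finSumFinEquiv)

/-- Apply a linear map (such as `α` or `δ`) to a vector valued form componentwise. -/
def mapV {n k : ℕ} {V W : Type*} [AddCommGroup V] [Module ℝ V]
    [AddCommGroup W] [Module ℝ W] (f : V →ₗ[ℝ] W) (ω : Form n k V) : Form n k W :=
  fun x => f.compAlternatingMap (ω x)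

/-- Reinterpret a `k`-form as an `l`-form along a proof of `k = l`. -/
def castD {n k l : ℕ} {V : Type*} [AddCommGroup V] [Module ℝ V]
    (h : k = l) (ω : Form n k V) : Form n l V :=
  fun x => (ω x).domDomCongr (finCongr h)

/-- The commutator bracket `[x, y] = x*y - y*x` of a matrix (associative) algebra,
as a bilinear map. -/
def lieB (H : Type*) [Ring H] [Algebra ℝ H] : H →ₗ[ℝ] H →ₗ[ℝ] H :=
  LinearMap.mul ℝ H - (LinearMap.mul ℝ H).flip

/-- A differential 2-crossed module `𝔩 →δ 𝔥 →α 𝔤` of matrix Lie algebras (realized as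
associative `ℝ`-algebras, with the commutator bracket `⁅x, y⁆ = x*y - y*x`), with
left actions `▷` of `𝔤` on `𝔥` and on `𝔩` by derivations (and on `𝔤` by the adjoint
action) and a `𝔤`-equivariant bilinear Peiffer lifting `{,} : 𝔥 × 𝔥 → 𝔩`. -/
structure TwoCrossed (𝔤 𝔥 𝔩 : Type*) [Ring 𝔤] [Algebra ℝ 𝔤] [Ring 𝔥] [Algebra ℝ 𝔥]
    [Ring 𝔩] [Algebra ℝ 𝔩] where
  /-- the Lie algebra homomorphism `δ : 𝔩 → 𝔥` -/
  δ : 𝔩 →ₗ[ℝ] 𝔥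
  /-- the Lie algebra homomorphism `α : 𝔥 → 𝔤` -/
  α : 𝔥 →ₗ[ℝ] 𝔤
  /-- the action `▷` of `𝔤` on `𝔥` -/
  ρ𝔥 : 𝔤 →ₗ[ℝ] 𝔥 →ₗ[ℝ] 𝔥
  /-- the action `▷` of `𝔤` on `𝔩` -/
  ρ𝔩 : 𝔤 →ₗ[ℝ] 𝔩 →ₗ[ℝ] 𝔩
  /-- the Peiffer lifting `{,} : 𝔥 × 𝔥 → 𝔩` -/
  pf : 𝔥 →ₗ[ℝ] 𝔥 →ₗ[ℝ] 𝔩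
  δ_lie : ∀ x y : 𝔩, δ ⁅x, y⁆ = ⁅δ x, δ y⁆
  α_lie : ∀ u v : 𝔥, α ⁅u, v⁆ = ⁅α u, α v⁆
  /-- `𝔤` acts on `𝔥` by derivations -/
  ρ𝔥_deriv : ∀ (X : 𝔤) (u v : 𝔥), ρ𝔥 X ⁅u, v⁆ = ⁅ρ𝔥 X u, v⁆ + ⁅u, ρ𝔥 X v⁆
  /-- `▷` is a Lie algebra action of `𝔤` on `𝔥` -/
  ρ𝔥_lie : ∀ (X Y : 𝔤) (u : 𝔥), ρ𝔥 ⁅X, Y⁆ u = ρ𝔥 X (ρ𝔥 Y u) - ρ𝔥 Y (ρ𝔥 X u)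
  /-- `𝔤` acts on `𝔩` by derivations -/
  ρ𝔩_deriv : ∀ (X : 𝔤) (x y : 𝔩), ρ𝔩 X ⁅x, y⁆ = ⁅ρ𝔩 X x, y⁆ + ⁅x, ρ𝔩 X y⁆
  /-- `▷` is a Lie algebra action of `𝔤` on `𝔩` -/
  ρ𝔩_lie : ∀ (X Y : 𝔤) (x : 𝔩), ρ𝔩 ⁅X, Y⁆ x = ρ𝔩 X (ρ𝔩 Y x) - ρ𝔩 Y (ρ𝔩 X x)
  /-- the Peiffer lifting is `𝔤`-equivariant: `X ▷ {u,v} = {X ▷ u, v} + {u, X ▷ v}` -/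
  pf_equivariant : ∀ (X : 𝔤) (u v : 𝔥), ρ𝔩 X (pf u v) = pf (ρ𝔥 X u) v + pf u (ρ𝔥 X v)
  /-- `δ` is `𝔤`-equivariant -/
  δ_equivariant : ∀ (X : 𝔤) (x : 𝔩), δ (ρ𝔩 X x) = ρ𝔥 X (δ x)
  /-- `α` is `𝔤`-equivariant (`𝔤` acting on itself by the adjoint action) -/
  α_equivariant : ∀ (X : 𝔤) (u : 𝔥), α (ρ𝔥 X u) = ⁅X, α u⁆
  /-- `𝔩 →δ 𝔥 →α 𝔤` is a complex -/
  comp_zero : ∀ x : 𝔩, α (δ x) = 0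
  /-- axiom (2): `δ{u, v} = ⟨u, v⟩ = [u, v] - α(u) ▷ v` -/
  ax2 : ∀ u v : 𝔥, δ (pf u v) = ⁅u, v⁆ - ρ𝔥 (α u) v
  /-- axiom (3): `[x, y] = {δ x, δ y}` for `x, y ∈ 𝔩` -/
  ax3 : ∀ x y : 𝔩, pf (δ x) (δ y) = ⁅x, y⁆
  /-- axiom (4): `{[u,v], w} = α(u)▷{v,w} + {u,[v,w]} - α(v)▷{u,w} - {v,[u,w]}` -/
  ax4 : ∀ u v w : 𝔥, pf ⁅u, v⁆ w =
    ρ𝔩 (α u) (pf v w) + pf u ⁅v, w⁆ - ρ𝔩 (α v) (pf u w) - pf v ⁅u, w⁆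
  /-- axiom (5): `{u, [v,w]} = {δ{u,v}, w} - {δ{u,w}, v}` -/
  ax5 : ∀ u v w : 𝔥, pf u ⁅v, w⁆ = pf (δ (pf u v)) w - pf (δ (pf u w)) v
  /-- axiom (6): `{δ x, v} + {v, δ x} = -α(v) ▷ x` -/
  ax6 : ∀ (x : 𝔩) (v : 𝔥), pf (δ x) v + pf v (δ x) = - ρ𝔩 (α v) x

namespace TwoCrossed

variable {𝔤 𝔥 𝔩 : Type*} [Ring 𝔤] [Algebra ℝ 𝔤] [Ring 𝔥] [Algebra ℝ 𝔥] [Ring 𝔩] [Algebra ℝ 𝔩]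

/-- The Peiffer commutator pairing `⟨u, v⟩ := [u, v] - α(u) ▷ v`, bilinearly. -/
def ang (T : TwoCrossed 𝔤 𝔥 𝔩) : 𝔥 →ₗ[ℝ] 𝔥 →ₗ[ℝ] 𝔥 :=
  (LinearMap.mul ℝ 𝔥 - (LinearMap.mul ℝ 𝔥).flip) - T.ρ𝔥 ∘ₗ T.α

/-- The action `v ▷' x := -{δ x, v}` of `𝔥` on `𝔩`, bilinearly. -/
def rhoPrime (T : TwoCrossed 𝔤 𝔥 𝔩) : 𝔥 →ₗ[ℝ] 𝔩 →ₗ[ℝ] 𝔩 :=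
  - (T.pf ∘ₗ T.δ).flip

end TwoCrossed

/-!
Both sides are linear images of the universal form `Ψ ∧^⊗ (Φ ∧^⊗ Φ)` with values in
`𝔥 ⊗ (𝔥 ⊗ 𝔥)`. Since `Φ` is a 1-form, `Φ ∧^⊗ Φ` is antisymmetric in the two tensor factors, so
two trilinear maps `(u, v, w) ↦ F u v w` have the same value on the universal form as soon as
`F u v w - F u w v` is the same for both. For `{u, v * w}` and `{⟨u, v⟩, w}` this is axiom (5).

The required rules of the wedge calculus hold already before alternatization, and over `ℝ` every
alternating map is the alternatization of a multilinear map.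
-/

section Alternatization

variable {ι ι' R M N : Type*} [Fintype ι] [DecidableEq ι] [Fintype ι'] [DecidableEq ι']
  [AddCommMonoid M] [AddCommGroup N]

theorem alternatization_domDomCongr [Semiring R] [Module R M] [Module R N] (e : ι ≃ ι')
    (m : MultilinearMap R (fun _ : ι => M) N) :
    (m.domDomCongr e).alternatization = m.alternatization.domDomCongr e := by
  ext v
  simp only [MultilinearMap.alternatization_apply, AlternatingMap.domDomCongr_apply,
    MultilinearMap.domDomCongr_apply]
  refine (Fintype.sum_equiv e.permCongr _ _ fun σ => ?_).symm
  simp [Equiv.permCongr_apply]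

theorem alternatization_surjective [Field R] [CharZero R] [Module R M] [Module R N] :
    Function.Surjective
      (MultilinearMap.alternatization : MultilinearMap R (fun _ : ι => M) N →+ M [⋀^ι]→ₗ[R] N) := by
  intro a
  have hcard : ((Fintype.card ι).factorial : R) ≠ 0 := Nat.cast_ne_zero.2 (Nat.factorial_ne_zero _)
  refine ⟨((((Fintype.card ι).factorial : R)⁻¹ • a : M [⋀^ι]→ₗ[R] N) :
    MultilinearMap R (fun _ : ι => M) N), ?_⟩
  rw [AlternatingMap.coe_alternatization, ← Nat.cast_smul_eq_nsmul R, smul_inv_smul₀ hcard]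

end Alternatization

section OuterProduct

variable {R M V W X : Type*} [CommSemiring R] [AddCommMonoid M] [Module R M]
  [AddCommMonoid V] [Module R V] [AddCommMonoid W] [Module R W] [AddCommMonoid X] [Module R X]
  {k l : ℕ}

/-- The outer product `(v₁, …, vₖ₊ₗ) ↦ β (a (v₁, …, vₖ)) (b (vₖ₊₁, …, vₖ₊ₗ))` of multilinear maps
along a bilinear pairing `β`: the wedge product before alternatization. -/
def outerB (β : V →ₗ[R] W →ₗ[R] X) (a : MultilinearMap R (fun _ : Fin k => M) V)
    (b : MultilinearMap R (fun _ : Fin l => M) W) :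
    MultilinearMap R (fun _ : Fin (k + l) => M) X :=
  (TensorProduct.lift β).compMultilinearMap ((a.domCoprod b).domDomCongr finSumFinEquiv)

theorem outerB_apply (β : V →ₗ[R] W →ₗ[R] X) (a : MultilinearMap R (fun _ : Fin k => M) V)
    (b : MultilinearMap R (fun _ : Fin l => M) W) (v : Fin (k + l) → M) :
    outerB β a b v = β (a fun i => v (Fin.castAdd l i)) (b fun i => v (Fin.natAdd k i)) := by
  simp [outerB]

theorem outerB_flip (β : V →ₗ[R] W →ₗ[R] X) (a : MultilinearMap R (fun _ : Fin k => M) V)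
    (b : MultilinearMap R (fun _ : Fin l => M) W) :
    outerB β.flip b a = (outerB β a b).domDomCongr finAddFlip := by
  -- The non-dependent type of `v` lets `simp` rewrite inside its argument.
  ext (v : Fin (l + k) → M)
  simp [outerB_apply]

theorem outerB_assoc {V' W' Y : Type*} [AddCommMonoid V'] [Module R V'] [AddCommMonoid W']
    [Module R W'] [AddCommMonoid Y] [Module R Y] {m : ℕ} {β : V →ₗ[R] W →ₗ[R] V'}
    {γ : V' →ₗ[R] X →ₗ[R] Y} {β' : W →ₗ[R] X →ₗ[R] W'} {γ' : V →ₗ[R] W' →ₗ[R] Y}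
    (h : ∀ u v w, γ (β u v) w = γ' u (β' v w)) (a : MultilinearMap R (fun _ : Fin k => M) V)
    (b : MultilinearMap R (fun _ : Fin l => M) W) (c : MultilinearMap R (fun _ : Fin m => M) X) :
    (outerB γ (outerB β a b) c).domDomCongr (finCongr (add_assoc k l m)) =
      outerB γ' a (outerB β' b c) := by
  ext v
  simp only [MultilinearMap.domDomCongr_apply, outerB_apply, h]
  congr! 6
  all_goals simp [Fin.ext_iff, add_assoc]

end OuterProduct

section Wedge

variable {n k l : ℕ} {V W X : Type*} [AddCommGroup V] [Module ℝ V]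
  [AddCommGroup W] [Module ℝ W] [AddCommGroup X] [Module ℝ X]

theorem wedgeB_eq_alternatization_outerB (β : V →ₗ[ℝ] W →ₗ[ℝ] X) {ω : Form n k V} {η : Form n l W}
    {x : Fin n → ℝ} {a : MultilinearMap ℝ (fun _ : Fin k => Fin n → ℝ) V}
    {b : MultilinearMap ℝ (fun _ : Fin l => Fin n → ℝ) W}
    (ha : a.alternatization = ω x) (hb : b.alternatization = η x) :
    wedgeB β ω η x = (outerB β a b).alternatization := by
  rw [wedgeB, outerB, LinearMap.compMultilinearMap_alternatization, alternatization_domDomCongr,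
    MultilinearMap.domCoprod_alternization, ha, hb]

theorem wedgeB_sub_pairing (β β' : V →ₗ[ℝ] W →ₗ[ℝ] X) (ω : Form n k V) (η : Form n l W) :
    wedgeB (β - β') ω η = wedgeB β ω η - wedgeB β' ω η := by
  funext x
  obtain ⟨a, ha⟩ := alternatization_surjective (ω x)
  obtain ⟨b, hb⟩ := alternatization_surjective (η x)
  have houter : outerB (β - β') a b = outerB β a b - outerB β' a b := by
    ext v
    simp [outerB_apply]
  simp only [Pi.sub_apply, wedgeB_eq_alternatization_outerB _ ha hb, houter, map_sub]

theorem wedgeB_mapV_right {W' : Type*} [AddCommGroup W'] [Module ℝ W']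
    (β : V →ₗ[ℝ] W →ₗ[ℝ] X) (g : W' →ₗ[ℝ] W) (ω : Form n k V) (η : Form n l W') :
    wedgeB β ω (mapV g η) = wedgeB (β.compl₂ g) ω η := by
  funext x
  obtain ⟨a, ha⟩ := alternatization_surjective (ω x)
  obtain ⟨b, hb⟩ := alternatization_surjective (η x)
  have hgb : (g.compMultilinearMap b).alternatization = mapV g η x := by
    rw [LinearMap.compMultilinearMap_alternatization, hb, mapV]
  rw [wedgeB_eq_alternatization_outerB _ ha hgb, wedgeB_eq_alternatization_outerB _ ha hb]
  congr 1

theorem wedgeB_neg_right (β : V →ₗ[ℝ] W →ₗ[ℝ] X) (ω : Form n k V) (η : Form n l W) :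
    wedgeB β ω (-η) = -wedgeB β ω η := by
  funext x
  obtain ⟨a, ha⟩ := alternatization_surjective (ω x)
  obtain ⟨b, hb⟩ := alternatization_surjective (η x)
  have hnegb : (-b).alternatization = (-η) x := by rw [map_neg, hb, Pi.neg_apply]
  have houter : outerB β a (-b) = -outerB β a b := by
    ext v
    simp [outerB_apply]
  rw [wedgeB_eq_alternatization_outerB _ ha hnegb, houter, map_neg, Pi.neg_apply,
    wedgeB_eq_alternatization_outerB _ ha hb]

theorem mapV_wedgeB {Y : Type*} [AddCommGroup Y] [Module ℝ Y] (g : X →ₗ[ℝ] Y)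
    (β : V →ₗ[ℝ] W →ₗ[ℝ] X) (ω : Form n k V) (η : Form n l W) :
    mapV g (wedgeB β ω η) = wedgeB (β.compr₂ g) ω η := by
  funext x
  rw [mapV, wedgeB, wedgeB, TensorProduct.lift_compr₂]
  rfl

theorem wedgeB_flip (β : V →ₗ[ℝ] W →ₗ[ℝ] X) (ω : Form n k V) (η : Form n l W) (x : Fin n → ℝ) :
    wedgeB β.flip η ω x = (wedgeB β ω η x).domDomCongr finAddFlip := by
  obtain ⟨a, ha⟩ := alternatization_surjective (ω x)
  obtain ⟨b, hb⟩ := alternatization_surjective (η x)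
  rw [wedgeB_eq_alternatization_outerB _ hb ha, wedgeB_eq_alternatization_outerB _ ha hb,
    outerB_flip, alternatization_domDomCongr]

theorem wedgeB_flip_of_one_forms (β : V →ₗ[ℝ] W →ₗ[ℝ] X) (φ : Form n 1 V) (ψ : Form n 1 W) :
    wedgeB β.flip ψ φ = -wedgeB β φ ψ := by
  funext x
  have hsign : Equiv.Perm.sign (finAddFlip : Fin (1 + 1) ≃ Fin (1 + 1)) = -1 := by decide
  rw [wedgeB_flip, AlternatingMap.domDomCongr_perm, hsign, Units.neg_smul, one_smul, Pi.neg_apply]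

theorem wedgeB_assoc {V' W' Y : Type*} [AddCommGroup V'] [Module ℝ V'] [AddCommGroup W']
    [Module ℝ W'] [AddCommGroup Y] [Module ℝ Y] {m : ℕ} {β : V →ₗ[ℝ] W →ₗ[ℝ] V'}
    {γ : V' →ₗ[ℝ] X →ₗ[ℝ] Y} {β' : W →ₗ[ℝ] X →ₗ[ℝ] W'} {γ' : V →ₗ[ℝ] W' →ₗ[ℝ] Y}
    (h : ∀ u v w, γ (β u v) w = γ' u (β' v w))
    (ω : Form n k V) (η : Form n l W) (θ : Form n m X) :
    castD (add_assoc k l m) (wedgeB γ (wedgeB β ω η) θ) = wedgeB γ' ω (wedgeB β' η θ) := by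
  funext x
  obtain ⟨a, ha⟩ := alternatization_surjective (ω x)
  obtain ⟨b, hb⟩ := alternatization_surjective (η x)
  obtain ⟨c, hc⟩ := alternatization_surjective (θ x)
  have hleft := wedgeB_eq_alternatization_outerB γ
    (wedgeB_eq_alternatization_outerB β ha hb).symm hc
  have hright := wedgeB_eq_alternatization_outerB γ' ha
    (wedgeB_eq_alternatization_outerB β' hb hc).symm
  rw [castD, hleft, hright, ← alternatization_domDomCongr, outerB_assoc h]

end Wedge

section WedgeSquare

variable {n k : ℕ} {V W X : Type*} [AddCommGroup V] [Module ℝ V]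
  [AddCommGroup W] [Module ℝ W] [AddCommGroup X] [Module ℝ X]

theorem wedgeB_wedgeB_mk_self_eq_zero {F : V →ₗ[ℝ] W ⊗[ℝ] W →ₗ[ℝ] X}
    (hF : ∀ u v w, F u (v ⊗ₜ w) = F u (w ⊗ₜ v)) (ω : Form n k V) (φ : Form n 1 W) :
    wedgeB F ω (wedgeB (TensorProduct.mk ℝ W W) φ φ) = 0 := by
  let τ : W ⊗[ℝ] W →ₗ[ℝ] W ⊗[ℝ] W := (TensorProduct.comm ℝ W W).toLinearMap
  let φφ : Form n (1 + 1) (W ⊗[ℝ] W) := wedgeB (TensorProduct.mk ℝ W W) φ φ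
  have hFτ : F.compl₂ τ = F := by
    ext u v w
    exact hF u w v
  have hφφ : mapV τ φφ = -φφ := by
    rw [mapV_wedgeB, ← wedgeB_flip_of_one_forms]
    rfl
  have : IsAddTorsionFree (Form n (k + (1 + 1)) X) := .of_isTorsionFree ℝ _
  refine self_eq_neg.1 ?_
  calc wedgeB F ω φφ = wedgeB F ω (mapV τ φφ) := by rw [wedgeB_mapV_right, hFτ]
    _ = -wedgeB F ω φφ := by rw [hφφ, wedgeB_neg_right]

theorem wedgeB_wedgeB_self {A V' : Type*} [AddCommGroup A] [Module ℝ A]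
    [AddCommGroup V'] [Module ℝ V'] {β : V →ₗ[ℝ] A →ₗ[ℝ] X} {μ : W →ₗ[ℝ] W →ₗ[ℝ] A}
    {γ : V' →ₗ[ℝ] W →ₗ[ℝ] X} {σ : V →ₗ[ℝ] W →ₗ[ℝ] V'}
    (h : ∀ u v w, β u (μ v w) - β u (μ w v) = γ (σ u v) w - γ (σ u w) v)
    (ω : Form n k V) (φ : Form n 1 W) :
    wedgeB β ω (wedgeB μ φ φ) = wedgeB γ (wedgeB σ ω φ) φ := by
  let F : V →ₗ[ℝ] W ⊗[ℝ] W →ₗ[ℝ] X := β.compl₂ (TensorProduct.lift μ)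
  let G : V →ₗ[ℝ] W ⊗[ℝ] W →ₗ[ℝ] X := TensorProduct.uncurry (.id ℝ) W W X ∘ₗ σ.compr₂ γ
  have hF : wedgeB β ω (wedgeB μ φ φ) = wedgeB F ω (wedgeB (TensorProduct.mk ℝ W W) φ φ) := by
    rw [← wedgeB_mapV_right, mapV_wedgeB]
    rfl
  -- `k + 1 + 1` and `k + (1 + 1)` are definitionally equal, so the cast in `wedgeB_assoc` vanishes.
  have hG : wedgeB γ (wedgeB σ ω φ) φ = wedgeB G ω (wedgeB (TensorProduct.mk ℝ W W) φ φ) :=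
    wedgeB_assoc (γ' := G) (β' := TensorProduct.mk ℝ W W) (fun _ _ _ => rfl) ω φ φ
  have hFG : ∀ u v w, (F - G) u (v ⊗ₜ w) = (F - G) u (w ⊗ₜ v) := fun u v w =>
    sub_eq_sub_iff_sub_eq_sub.1 (h u v w)
  rw [hF, hG, ← sub_eq_zero, ← wedgeB_sub_pairing, wedgeB_wedgeB_mk_self_eq_zero hFG]

end WedgeSquare

section Peiffer

variable {𝔤 𝔥 𝔩 : Type*} [Ring 𝔤] [Algebra ℝ 𝔤] [Ring 𝔥] [Algebra ℝ 𝔥] [Ring 𝔩] [Algebra ℝ 𝔩]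
  (T : TwoCrossed 𝔤 𝔥 𝔩)

theorem TwoCrossed.ang_eq_δ_pf (u v : 𝔥) : T.ang u v = T.δ (T.pf u v) := by
  simp [TwoCrossed.ang, T.ax2, Ring.lie_def]

theorem TwoCrossed.pf_mul_sub_pf_mul (u v w : 𝔥) :
    T.pf u (v * w) - T.pf u (w * v) = T.pf (T.ang u v) w - T.pf (T.ang u w) v := by
  rw [T.ang_eq_δ_pf, T.ang_eq_δ_pf, ← T.ax5, Ring.lie_def, map_sub]

theorem statement_4_general {n k : ℕ} (Ψ : Form n k 𝔥) (Φ : Form n 1 𝔥) :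
    wedgeB T.pf Ψ (wedgeB (LinearMap.mul ℝ 𝔥) Φ Φ) = wedgeB T.pf (wedgeB T.ang Ψ Φ) Φ :=
  wedgeB_wedgeB_self T.pf_mul_sub_pf_mul Ψ Φ

end Peiffer

/-- for `Ψ ∈ Λᵏ(U,𝔥)` and `Φ ∈ Λ¹(U,𝔥)`,
`Ψ ∧^{,} (Φ∧Φ) = (Ψ ∧^⟨,⟩ Φ) ∧^{,} Φ`. -/
theorem statement_4 {n : ℕ} {U : Set (Fin n → ℝ)} (hU : IsOpen U)
    {𝔤 𝔥 𝔩 : Type*} [NormedRing 𝔤] [NormedAlgebra ℝ 𝔤] [NormedRing 𝔥] [NormedAlgebra ℝ 𝔥]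
    [NormedRing 𝔩] [NormedAlgebra ℝ 𝔩] (T : TwoCrossed 𝔤 𝔥 𝔩)
    {k : ℕ} (Ψ : Form n k 𝔥) (Φ : Form n 1 𝔥)
    (hΨ : SmoothFormOn U Ψ) (hΦ : SmoothFormOn U Φ) :
    ∀ x ∈ U, wedgeB T.pf Ψ (wedgeB (LinearMap.mul ℝ 𝔥) Φ Φ) x
      = wedgeB T.pf (wedgeB T.ang Ψ Φ) Φ x :=
  fun x _ => congrFun (statement_4_general T Ψ Φ) x

end
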